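/- For an n×n matrix B over the extended reals ℝ̄ and a vector x ∈ ℝ̄^n, the fixpoint condition x = B* ⊗ x (max-plus) holds if and only if the dual fixpoint condition x = (B^♯)_* ⊗' x (min-plus) holds. -/

import Mathlib

/-!
Residuation `a + b ≤ c ↔ b ≤ -a +' c`, with `+'` the min-plus addition, holds for all extended
reals. Hence max-plus addition distributes over suprema, so that `B* ⊗ x` is the supremum of the
iterates of `B ⊗ ·` at `x`, which equals `x` if and only if `B ⊗ x ≤ x`. Negating all entries gives
the min-plus form: `(B^♯)_* ⊗' x` equals `x` if and only if `x ≤ B^♯ ⊗' x`. The two inequalities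
are equivalent because, again by residuation, `B ⊗ ·` is left adjoint to `B^♯ ⊗' ·`.
-/

noncomputable section

/-- Max-plus matrix product over the extended reals (`-∞` is absorbing for `+` in `EReal`). -/
def mpMul {m n p : ℕ} (A : Matrix (Fin m) (Fin n) EReal) (B : Matrix (Fin n) (Fin p) EReal) :
    Matrix (Fin m) (Fin p) EReal :=
  fun i j => ⨆ k, A i k + B k j

/-- Max-plus matrix-vector product. -/
def mpMulVec {m n : ℕ} (A : Matrix (Fin m) (Fin n) EReal) (x : Fin n → EReal) :
    Fin m → EReal :=
  fun i => ⨆ k, A i k + x k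

/-- Min-plus addition on `EReal`: `+∞` is absorbing. -/
def mnAdd (a b : EReal) : EReal := -((-a) + (-b))

/-- Min-plus matrix product. -/
def mnMul {m n p : ℕ} (A : Matrix (Fin m) (Fin n) EReal) (B : Matrix (Fin n) (Fin p) EReal) :
    Matrix (Fin m) (Fin p) EReal :=
  fun i j => ⨅ k, mnAdd (A i k) (B k j)

/-- Min-plus matrix-vector product. -/
def mnMulVec {m n : ℕ} (A : Matrix (Fin m) (Fin n) EReal) (x : Fin n → EReal) :
    Fin m → EReal :=
  fun i => ⨅ k, mnAdd (A i k) (x k)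

/-- Conjugate matrix: `(conj A) i j = -(A j i)`. -/
def conjM {m n : ℕ} (A : Matrix (Fin m) (Fin n) EReal) : Matrix (Fin n) (Fin m) EReal :=
  fun i j => -(A j i)

/-- Max-plus identity matrix. -/
def mpId (n : ℕ) : Matrix (Fin n) (Fin n) EReal :=
  fun i j => if i = j then 0 else ⊥

/-- Min-plus identity matrix. -/
def mnId (n : ℕ) : Matrix (Fin n) (Fin n) EReal :=
  fun i j => if i = j then 0 else ⊤

/-- Max-plus matrix powers. -/
def mpPow {n : ℕ} (A : Matrix (Fin n) (Fin n) EReal) : ℕ → Matrix (Fin n) (Fin n) EReal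
  | 0 => mpId n
  | k + 1 => mpMul A (mpPow A k)

/-- Min-plus matrix powers. -/
def mnPow {n : ℕ} (A : Matrix (Fin n) (Fin n) EReal) : ℕ → Matrix (Fin n) (Fin n) EReal
  | 0 => mnId n
  | k + 1 => mnMul A (mnPow A k)

/-- Max-plus Kleene star: entrywise supremum of all max-plus powers. -/
def mpStar {n : ℕ} (A : Matrix (Fin n) (Fin n) EReal) : Matrix (Fin n) (Fin n) EReal :=
  fun i j => ⨆ k, mpPow A k i j

/-- Min-plus star: entrywise infimum of all min-plus powers. -/
def mnStar {n : ℕ} (A : Matrix (Fin n) (Fin n) EReal) : Matrix (Fin n) (Fin n) EReal :=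
  fun i j => ⨅ k, mnPow A k i j

/-- Entrywise maximum of two matrices (`A ⊕ B`). -/
def mSup {m n : ℕ} (A B : Matrix (Fin m) (Fin n) EReal) : Matrix (Fin m) (Fin n) EReal :=
  fun i j => A i j ⊔ B i j

lemma add_le_iff_le_mnAdd {a b c : EReal} : a + b ≤ c ↔ b ≤ mnAdd (-a) c := by
  have regroup : a + b - c = a - c - -b := by
    simp only [sub_eq_add_neg, neg_neg, add_right_comm]
  rw [mnAdd, neg_neg, EReal.le_neg, ← sub_eq_add_neg, ← EReal.sub_nonpos, regroup,
    EReal.sub_nonpos]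

lemma gc_add_mnAdd (a : EReal) : GaloisConnection (a + ·) (mnAdd (-a)) :=
  fun _ _ => add_le_iff_le_mnAdd

lemma ereal_add_iSup {ι : Sort*} (a : EReal) (f : ι → EReal) : a + ⨆ i, f i = ⨆ i, a + f i :=
  (gc_add_mnAdd a).l_iSup

lemma ereal_iSup_add {ι : Sort*} (f : ι → EReal) (a : EReal) :
    (⨆ i, f i) + a = ⨆ i, f i + a := by
  simp only [add_comm _ a, ereal_add_iSup]

lemma ereal_neg_iSup {ι : Sort*} (f : ι → EReal) : -(⨆ i, f i) = ⨅ i, -f i :=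
  EReal.negOrderIso.map_iSup f

lemma eq_iSup_iterate_iff {α : Type*} [CompleteLattice α] {f : α → α} (hf : Monotone f) {x : α} :
    x = ⨆ k, f^[k] x ↔ f x ≤ x := by
  constructor
  · intro fixed
    calc f x ≤ ⨆ k, f^[k] x := le_iSup (fun k => f^[k] x) 1
      _ = x := fixed.symm
  · intro subsolution
    exact le_antisymm (le_iSup (fun k => f^[k] x) 0)
      (iSup_le fun k => hf.antitone_iterate_of_map_le subsolution k.zero_le)

section MaxPlus

variable {m n p : ℕ}

lemma gc_mpMulVec_mnMulVec_conjM (A : Matrix (Fin m) (Fin n) EReal) :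
    GaloisConnection (mpMulVec A) (mnMulVec (conjM A)) := by
  intro x y
  simp only [Pi.le_def, mpMulVec, mnMulVec, conjM, iSup_le_iff, le_iInf_iff, add_le_iff_le_mnAdd]
  exact forall_comm

lemma mpMulVec_mpId (x : Fin n → EReal) : mpMulVec (mpId n) x = x := by
  funext i
  refine le_antisymm (iSup_le fun j => ?_) (le_iSup_of_le i ?_)
  · by_cases hij : i = j <;> simp [mpId, hij]
  · simp [mpId]

lemma mpMulVec_mpMul (A : Matrix (Fin m) (Fin n) EReal) (B : Matrix (Fin n) (Fin p) EReal)
    (x : Fin p → EReal) : mpMulVec (mpMul A B) x = mpMulVec A (mpMulVec B x) := by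
  funext i
  simp only [mpMulVec, mpMul, ereal_iSup_add, ereal_add_iSup, add_assoc]
  exact iSup_comm

lemma mpMulVec_mpPow (B : Matrix (Fin n) (Fin n) EReal) (k : ℕ) (x : Fin n → EReal) :
    mpMulVec (mpPow B k) x = (mpMulVec B)^[k] x := by
  induction k with
  | zero => exact mpMulVec_mpId x
  | succ k ih => rw [mpPow, mpMulVec_mpMul, ih, Function.iterate_succ_apply']

lemma mpMulVec_mpStar (B : Matrix (Fin n) (Fin n) EReal) (x : Fin n → EReal) :
    mpMulVec (mpStar B) x = ⨆ k, (mpMulVec B)^[k] x := by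
  simp only [← mpMulVec_mpPow]
  funext i
  simp only [mpMulVec, mpStar, ereal_iSup_add, iSup_apply]
  exact iSup_comm

lemma eq_mpMulVec_mpStar_iff (B : Matrix (Fin n) (Fin n) EReal) (x : Fin n → EReal) :
    x = mpMulVec (mpStar B) x ↔ mpMulVec B x ≤ x := by
  rw [mpMulVec_mpStar]
  exact eq_iSup_iterate_iff (gc_mpMulVec_mnMulVec_conjM B).monotone_l

end MaxPlus

section MinPlus

variable {m n p : ℕ}

lemma mnMulVec_eq_neg_mpMulVec (A : Matrix (Fin m) (Fin n) EReal) (x : Fin n → EReal) :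
    mnMulVec A x = -mpMulVec (-A) (-x) := by
  funext i
  simp only [mnMulVec, mnAdd, mpMulVec, Pi.neg_apply, Matrix.neg_apply, ereal_neg_iSup]

lemma mnMul_eq_neg_mpMul (A : Matrix (Fin m) (Fin n) EReal) (B : Matrix (Fin n) (Fin p) EReal) :
    mnMul A B = -mpMul (-A) (-B) := by
  ext i j
  simp only [mnMul, mnAdd, mpMul, Matrix.neg_apply, ereal_neg_iSup]

lemma mnId_eq_neg_mpId (n : ℕ) : mnId n = -mpId n := by
  ext i j
  by_cases hij : i = j <;> simp [mnId, mpId, hij]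

lemma mnPow_eq_neg_mpPow (A : Matrix (Fin n) (Fin n) EReal) (k : ℕ) :
    mnPow A k = -mpPow (-A) k := by
  induction k with
  | zero => exact mnId_eq_neg_mpId n
  | succ k ih => rw [mnPow, mpPow, ih, mnMul_eq_neg_mpMul, neg_neg]

lemma mnStar_eq_neg_mpStar (A : Matrix (Fin n) (Fin n) EReal) : mnStar A = -mpStar (-A) := by
  ext i j
  simp only [mnStar, mpStar, mnPow_eq_neg_mpPow, Matrix.neg_apply, ereal_neg_iSup]

lemma eq_mnMulVec_mnStar_iff (A : Matrix (Fin n) (Fin n) EReal) (x : Fin n → EReal) :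
    x = mnMulVec (mnStar A) x ↔ x ≤ mnMulVec A x := by
  rw [mnMulVec_eq_neg_mpMulVec, mnStar_eq_neg_mpStar, neg_neg, ← neg_eq_iff_eq_neg,
    eq_mpMulVec_mpStar_iff, mnMulVec_eq_neg_mpMulVec A]
  exact forall_congr' fun _ => EReal.le_neg.symm

end MinPlus

/-- `x = B* ⊗ x ↔ x = (B^♯)_* ⊗' x`. -/
theorem star_fix_iff_dual {n : ℕ} (B : Matrix (Fin n) (Fin n) EReal)
    (x : Fin n → EReal) :
    x = mpMulVec (mpStar B) x ↔ x = mnMulVec (mnStar (conjM B)) x := by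
  rw [eq_mpMulVec_mpStar_iff, eq_mnMulVec_mnStar_iff]
  exact gc_mpMulVec_mnMulVec_conjM B x x
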